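/- (Two-sided control under the tail condition, frequentist version of Theorem 4(i).) Let 0 < t₀ < τ, N₀ ≥ 1, and let A satisfy 1 + t₀ < A < 1 + τ; set α = f_o(A,t₀) and β = g_o(A,τ). Then α > 0, β > 0, and for every θ in the tail class 𝒯(τ,t₀,N₀) and all integers n₁ ≥ 1 and n₂ ≥ N₀: P_θ({x : ∃ d ≥ 1 with (d < d_τ(θ) − n₁ or d > d_τ(θ) + n₂) and crit_A(x,d) ≤ crit_A(x,d_τ(θ))}) ≤ e^{−αn₂}/(1−e^{−α}) + e^{−βn₁}/(1−e^{−β}). -/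

import Mathlib

open MeasureTheory ProbabilityTheory

noncomputable section

/-- Tail sum `∑_{i>d} θ_i²` (indices `i = 1,2,…`). -/
def tailSum (θ : ℕ → ℝ) (d : ℕ) : ℝ := ∑' i : ℕ, if d < i then θ i ^ 2 else 0

/-- The τ-quantization error `r_τ(d,θ) = ∑_{i>d} θ_i² + τ d ε²`. -/
def rErr (ε τ : ℝ) (θ : ℕ → ℝ) (d : ℕ) : ℝ := tailSum θ d + τ * d * ε ^ 2

/-- The local effective τ-dimension: the smallest `d ≥ 1` minimizing `r_τ(·,θ)` over `d ≥ 1`. -/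
def effDim (ε τ : ℝ) (θ : ℕ → ℝ) : ℕ :=
  sInf {d : ℕ | 1 ≤ d ∧ ∀ d' : ℕ, 1 ≤ d' → rErr ε τ θ d ≤ rErr ε τ θ d'}

/-- The penalized criterion `crit_A(x,d) = -∑_{i=1}^d x_i² + A ε² d`. -/
def critF (ε A : ℝ) (x : ℕ → ℝ) (d : ℕ) : ℝ :=
  -(∑ i ∈ Finset.Icc 1 d, x i ^ 2) + A * ε ^ 2 * d

/-- `f(h,a,t) = (1/2)(a h + log(1-h) - t h/(1-h))`. -/
def fFun (h a t : ℝ) : ℝ := (a * h + Real.log (1 - h) - t * h / (1 - h)) / 2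

/-- `g(h,a,t) = f(-h,a,t)`. -/
def gFun (h a t : ℝ) : ℝ := fFun (-h) a t

/-- `f_o(a,t) = sup_{h ∈ [0,1)} f(h,a,t)`. -/
def fSup (a t : ℝ) : ℝ := sSup ((fun h => fFun h a t) '' Set.Ico 0 1)

/-- `g_o(a,t) = sup_{h ∈ [0,1]} g(h,a,t)`. -/
def gSup (a t : ℝ) : ℝ := sSup ((fun h => gFun h a t) '' Set.Icc 0 1)

/-- `P` is the infinite product measure `⨂_{i≥1} N(θ_i, ε²)` on the sequence space `ℝ^ℕ`,
characterized by being a probability measure whose finite-dimensional projections onto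
the coordinates `1,…,n` are the corresponding finite products of Gaussians. -/
def IsGaussianProduct (ε : ℝ) (θ : ℕ → ℝ) (P : Measure (ℕ → ℝ)) : Prop :=
  IsProbabilityMeasure P ∧
  ∀ n : ℕ, P.map (fun x (i : Fin n) => x ((i : ℕ) + 1)) =
    Measure.pi fun i : Fin n => gaussianReal (θ ((i : ℕ) + 1)) ((ε ^ 2).toNNReal)

lemma geom_aux (α : ℝ) (hα : 0 < α) (n : ℕ) :
    ∑' k : ℕ, ENNReal.ofReal (Real.exp (-((n + 1 + k : ℕ) : ℝ) * α)) ≤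
      ENNReal.ofReal (Real.exp (-α * n) / (1 - Real.exp (-α))) := by
  have h1 : Real.exp (-α) < 1 := by simpa using hα
  have h0 : 0 < Real.exp (-α) := Real.exp_pos _
  have e : ∀ k : ℕ, Real.exp (-((n + 1 + k : ℕ) : ℝ) * α)
      = Real.exp (-α * n) * Real.exp (-α) * Real.exp (-α) ^ k := by
    intro k
    rw [← Real.exp_nat_mul, ← Real.exp_add, ← Real.exp_add]
    push_cast
    ring_nf
  have hs : Summable fun k : ℕ => Real.exp (-α * n) * Real.exp (-α) * Real.exp (-α) ^ k :=
    (summable_geometric_of_lt_one h0.le h1).mul_left _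
  simp only [e]
  rw [← ENNReal.ofReal_tsum_of_nonneg (fun k => by positivity) hs, tsum_mul_left,
    tsum_geometric_of_lt_one h0.le h1]
  apply ENNReal.ofReal_le_ofReal
  rw [div_eq_mul_inv]
  have : 0 < 1 - Real.exp (-α) := by linarith
  have h2 : 0 < Real.exp (-α * n) := Real.exp_pos _
  gcongr
  nlinarith

lemma fSup_bdd (A t : ℝ) (hA : 0 < A) (ht : 0 < t) :
    BddAbove ((fun h => fFun h A t) '' Set.Ico 0 1) := by
  refine ⟨A / 2, ?_⟩
  rintro _ ⟨h, ⟨h0, h1⟩, rfl⟩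
  have l : Real.log (1 - h) ≤ 0 := Real.log_nonpos (by linarith) (by linarith)
  have : 0 ≤ t * h / (1 - h) := div_nonneg (by positivity) (by linarith)
  simp only [fFun]
  nlinarith

lemma gSup_bdd (A t : ℝ) (hA : 0 < A) (ht : 0 < t) :
    BddAbove ((fun h => gFun h A t) '' Set.Icc 0 1) := by
  refine ⟨(1 + t) / 2, ?_⟩
  rintro _ ⟨h, ⟨h0, h1⟩, rfl⟩
  have l : Real.log (1 + h) ≤ h := by
    have := Real.log_le_sub_one_of_pos (show 0 < 1 + h by linarith)
    linarith
  have : t * h / (1 + h) ≤ t := by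
    rw [div_le_iff₀ (by linarith)]; nlinarith
  simp only [gFun, fFun, sub_neg_eq_add, mul_neg, neg_div]
  nlinarith

lemma fSup_pos (A t : ℝ) (ht : 0 < t) (h : 1 + t < A) : 0 < fSup A t := by
  have hA : 0 < A := by linarith
  have hh0 : 0 < (A - 1 - t) / (2 * A) := div_pos (by linarith) (by linarith)
  have hh1 : (A - 1 - t) / (2 * A) < 1 := by rw [div_lt_one (by linarith)]; linarith
  refine lt_of_lt_of_le ?_ (le_csSup (fSup_bdd A t hA ht) ⟨(A - 1 - t) / (2 * A), ⟨hh0.le, hh1⟩, rfl⟩)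
  have hk : (1 + t) / (1 - (A - 1 - t) / (2 * A)) < A := by
    rw [div_lt_iff₀ (by linarith)]
    have : A * (1 - (A - 1 - t) / (2 * A)) = (A + 1 + t) / 2 := by field_simp; ring
    rw [this]; linarith
  revert hk hh0 hh1
  generalize (A - 1 - t) / (2 * A) = y
  intro hh0 hh1 hk
  have l := Real.one_sub_inv_le_log_of_pos (show 0 < 1 - y by linarith)
  have e : 1 - (1 - y)⁻¹ - t * y / (1 - y) = - y * ((1 + t) / (1 - y)) := by
    have : 1 - y ≠ 0 := by linarith
    field_simp; ring
  simp only [fFun]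
  nlinarith [mul_pos hh0 (sub_pos.2 hk)]

lemma gSup_pos (A t : ℝ) (hA : 0 < A) (ht : 0 < t) (h : A < 1 + t) : 0 < gSup A t := by
  obtain ⟨y, hh0, hh1, hk⟩ : ∃ y : ℝ, 0 < y ∧ y ≤ 1 ∧ A < (1 + t) / (1 + y) := by
    have hp : 0 < (1 + t - A) / (2 * A) := div_pos (by linarith) (by linarith)
    refine ⟨min 1 ((1 + t - A) / (2 * A)), lt_min one_pos hp, min_le_left _ _, ?_⟩
    have hm : 0 < min 1 ((1 + t - A) / (2 * A)) := lt_min one_pos hp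
    rw [lt_div_iff₀ (by linarith)]
    have h2 : min 1 ((1 + t - A) / (2 * A)) ≤ (1 + t - A) / (2 * A) := min_le_right _ _
    have : A * ((1 + t - A) / (2 * A)) = (1 + t - A) / 2 := by field_simp
    nlinarith
  refine lt_of_lt_of_le ?_ (le_csSup (gSup_bdd A t hA ht) ⟨y, ⟨hh0.le, hh1⟩, rfl⟩)
  have l := Real.one_sub_inv_le_log_of_pos (show 0 < 1 + y by linarith)
  have e : 1 - (1 + y)⁻¹ + t * y / (1 + y) = y * ((1 + t) / (1 + y)) := by
    have : 1 + y ≠ 0 := by linarith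
    field_simp; ring
  simp only [gFun, fFun, sub_neg_eq_add, mul_neg, neg_div]
  nlinarith [mul_pos hh0 (sub_pos.2 hk)]

/-- One-dimensional Laplace transform of a squared Gaussian. -/
lemma gauss_sq (ε θ h : ℝ) (hε : 0 < ε) (hh : h < 1) :
    ∫⁻ x, ENNReal.ofReal (Real.exp (h / (2 * ε ^ 2) * x ^ 2)) ∂(gaussianReal θ (ε ^ 2).toNNReal)
      = ENNReal.ofReal (Real.exp (-(Real.log (1 - h)) / 2 + h * θ ^ 2 / (2 * ε ^ 2 * (1 - h)))) := by
  have h1 : 0 < 1 - h := by linarith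
  have hv : (ε ^ 2).toNNReal ≠ 0 := by
    simp only [ne_eq, Real.toNNReal_eq_zero, not_le]; positivity
  have hv' : (ε ^ 2 / (1 - h)).toNNReal ≠ 0 := by
    simp only [ne_eq, Real.toNNReal_eq_zero, not_le]; positivity
  rw [gaussianReal_of_var_ne_zero _ hv,
    lintegral_withDensity_eq_lintegral_mul _ (measurable_gaussianPDF _ _) (by fun_prop)]
  have key : ∀ x : ℝ, (gaussianPDF θ (ε ^ 2).toNNReal *
      fun x => ENNReal.ofReal (Real.exp (h / (2 * ε ^ 2) * x ^ 2))) x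
      = ENNReal.ofReal (Real.exp (-(Real.log (1 - h)) / 2 + h * θ ^ 2 / (2 * ε ^ 2 * (1 - h)))) *
        gaussianPDF (θ / (1 - h)) (ε ^ 2 / (1 - h)).toNNReal x := by
    intro x
    simp only [Pi.mul_apply, gaussianPDF]
    rw [← ENNReal.ofReal_mul (gaussianPDFReal_nonneg _ _ _), ← ENNReal.ofReal_mul (Real.exp_pos _).le]
    congr 1
    simp only [gaussianPDFReal]
    rw [Real.coe_toNNReal _ (by positivity), Real.coe_toNNReal _ (by positivity)]
    have hs : (√(2 * Real.pi * (ε ^ 2 / (1 - h))))⁻¹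
        = (√(2 * Real.pi * ε ^ 2))⁻¹ * Real.exp (Real.log (1 - h) / 2) := by
      rw [← mul_div_assoc, Real.sqrt_div (by positivity), inv_div, Real.exp_half, Real.exp_log h1]
      ring
    rw [hs]
    have e1 : ∀ a b c : ℝ, a * Real.exp b * Real.exp c = a * Real.exp (b + c) := by
      intro a b c; rw [Real.exp_add]; ring
    have e2 : ∀ a b c d : ℝ, Real.exp b * (a * Real.exp c * Real.exp d)
        = a * Real.exp (b + c + d) := by
      intro a b c d; rw [Real.exp_add, Real.exp_add]; ring
    rw [e1, e2]
    congr 2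
    field_simp
    ring
  simp only [key]
  rw [lintegral_const_mul _ (measurable_gaussianPDF _ _), lintegral_gaussianPDF_eq_one _ hv', mul_one]

lemma gauss_prod (ε : ℝ) (hε : 0 < ε) (θ : ℕ → ℝ) (P : Measure (ℕ → ℝ))
    (hP : IsGaussianProduct ε θ P) (h : ℕ → ℝ) (hh : ∀ i, h i < 1) (n : ℕ) :
    ∫⁻ x, ENNReal.ofReal (Real.exp (∑ i ∈ Finset.range n, h (i+1) / (2 * ε ^ 2) * x (i+1) ^ 2)) ∂P
      = ENNReal.ofReal (Real.exp (∑ i ∈ Finset.range n,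
        (-(Real.log (1 - h (i+1))) / 2 + h (i+1) * θ (i+1) ^ 2 / (2 * ε ^ 2 * (1 - h (i+1)))))) := by
  have hm : Measurable (fun (x : ℕ → ℝ) (i : Fin n) => x ((i : ℕ) + 1)) := by fun_prop
  have h1 : ∫⁻ y : Fin n → ℝ, ∏ i : Fin n,
      ENNReal.ofReal (Real.exp (h (i+1) / (2 * ε ^ 2) * y i ^ 2))
        ∂(P.map (fun x (i : Fin n) => x ((i : ℕ) + 1)))
      = ∫⁻ x, ENNReal.ofReal (Real.exp (∑ i ∈ Finset.range n, h (i+1) / (2 * ε ^ 2) * x (i+1) ^ 2)) ∂P := by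
    rw [lintegral_map (by fun_prop) hm]
    congr 1 with x
    rw [← ENNReal.ofReal_prod_of_nonneg (fun i _ => (Real.exp_pos _).le), ← Real.exp_sum,
      Fin.sum_univ_eq_sum_range (fun i => h (i+1) / (2 * ε ^ 2) * x (i+1) ^ 2)]
  rw [← h1, hP.2 n]
  rw [lintegral_prod_eq_prod_lintegral_of_indepFun Finset.univ
    (fun (i : Fin n) (y : Fin n → ℝ) => ENNReal.ofReal (Real.exp (h (i+1) / (2 * ε ^ 2) * y i ^ 2)))
    (iIndepFun_pi (μ := fun i : Fin n => gaussianReal (θ ((i : ℕ) + 1)) ((ε ^ 2).toNNReal))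
      (X := fun (i : Fin n) (z : ℝ) => ENNReal.ofReal (Real.exp (h (i+1) / (2 * ε ^ 2) * z ^ 2)))
      (fun i => by fun_prop)) (fun i => by fun_prop)]
  rw [Real.exp_sum, ENNReal.ofReal_prod_of_nonneg (fun i _ => (Real.exp_pos _).le),
    ← Fin.prod_univ_eq_prod_range (fun i => ENNReal.ofReal (Real.exp
      (-(Real.log (1 - h (i+1))) / 2 + h (i+1) * θ (i+1) ^ 2 / (2 * ε ^ 2 * (1 - h (i+1))))))]
  refine Finset.prod_congr rfl fun i _ => ?_
  rw [← gauss_sq ε _ _ hε (hh _)]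
  exact (measurePreserving_eval (fun i : Fin n => gaussianReal (θ ((i : ℕ) + 1))
    ((ε ^ 2).toNNReal)) i).lintegral_comp
    (f := fun z => ENNReal.ofReal (Real.exp (h (i+1) / (2 * ε ^ 2) * z ^ 2))) (by fun_prop)

lemma sum_ite_aux (u : ℕ → ℝ) (a k : ℕ) :
    ∑ i ∈ Finset.range (a + k), (if a < i + 1 then u (i+1) else 0)
      = ∑ i ∈ Finset.Icc (a + 1) (a + k), u i := by
  induction k with
  | zero =>
    simp only [add_zero]
    rw [Finset.sum_eq_zero]
    · simp
    · intro i hi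
      have := Finset.mem_range.1 hi
      rw [if_neg (by omega)]
  | succ k ih =>
    rw [← add_assoc, Finset.sum_range_succ, ih, if_pos (by omega),
      Finset.sum_Icc_succ_top (by omega)]

lemma gauss_block (ε : ℝ) (hε : 0 < ε) (θ : ℕ → ℝ) (P : Measure (ℕ → ℝ))
    (hP : IsGaussianProduct ε θ P) (h : ℝ) (hh : h < 1) (a k : ℕ) :
    ∫⁻ x, ENNReal.ofReal (Real.exp (h / (2 * ε ^ 2) *
        ∑ i ∈ Finset.Icc (a + 1) (a + k), x i ^ 2)) ∂P
      = ENNReal.ofReal (Real.exp (-k * (Real.log (1 - h)) / 2 +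
        h / (2 * ε ^ 2 * (1 - h)) * ∑ i ∈ Finset.Icc (a + 1) (a + k), θ i ^ 2)) := by
  have := gauss_prod ε hε θ P hP (fun i => if a < i then h else 0)
    (fun i => by split_ifs <;> linarith) (a + k)
  have e1 : ∀ x : ℕ → ℝ, ∑ i ∈ Finset.range (a + k),
      (if a < i + 1 then h else 0) / (2 * ε ^ 2) * x (i+1) ^ 2
      = h / (2 * ε ^ 2) * ∑ i ∈ Finset.Icc (a + 1) (a + k), x i ^ 2 := by
    intro x
    rw [Finset.mul_sum, ← sum_ite_aux (fun i => h / (2 * ε ^ 2) * x i ^ 2)]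
    refine Finset.sum_congr rfl fun i _ => ?_
    split_ifs <;> simp
  have e2 : ∑ i ∈ Finset.range (a + k), (-(Real.log (1 - (if a < i + 1 then h else 0))) / 2 +
      (if a < i + 1 then h else 0) * θ (i+1) ^ 2 / (2 * ε ^ 2 * (1 - (if a < i + 1 then h else 0))))
      = -k * (Real.log (1 - h)) / 2 +
        h / (2 * ε ^ 2 * (1 - h)) * ∑ i ∈ Finset.Icc (a + 1) (a + k), θ i ^ 2 := by
    have e3 : -k * (Real.log (1 - h)) / 2 = ∑ i ∈ Finset.Icc (a + 1) (a + k),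
        (-(Real.log (1 - h)) / 2) := by
      rw [Finset.sum_const, Nat.card_Icc, nsmul_eq_mul]
      have : a + k + 1 - (a + 1) = k := by omega
      rw [this]; ring
    rw [e3, Finset.mul_sum, ← Finset.sum_add_distrib, ← sum_ite_aux (fun i =>
      -(Real.log (1 - h)) / 2 + h / (2 * ε ^ 2 * (1 - h)) * θ i ^ 2)]
    refine Finset.sum_congr rfl fun i _ => ?_
    split_ifs
    · ring
    · simp
  simp only [e1, e2] at this
  exact this

/-- Chernoff bound. -/
lemma chernoff (ε : ℝ) (hε : 0 < ε) (θ : ℕ → ℝ) (P : Measure (ℕ → ℝ))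
    (hP : IsGaussianProduct ε θ P) (h A t : ℝ) (hh : h < 1) (a k : ℕ)
    (ht : h * ∑ i ∈ Finset.Icc (a + 1) (a + k), θ i ^ 2 ≤ h * (t * ε ^ 2 * k)) :
    P {x | h * (A * ε ^ 2 * k) ≤ h * ∑ i ∈ Finset.Icc (a + 1) (a + k), x i ^ 2} ≤
      ENNReal.ofReal (Real.exp (-(k * fFun h A t))) := by
  have h1 : 0 < 1 - h := by linarith
  have mk := meas_ge_le_lintegral_div (μ := P) (f := fun x : ℕ → ℝ => ENNReal.ofReal (Real.exp
    (h / (2 * ε ^ 2) * ∑ i ∈ Finset.Icc (a + 1) (a + k), x i ^ 2)))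
    (by refine Measurable.aemeasurable ?_; fun_prop)
    (ε := ENNReal.ofReal (Real.exp (h * A * k / 2)))
    (by simp only [ne_eq, ENNReal.ofReal_eq_zero, not_le]; exact Real.exp_pos _) ENNReal.ofReal_ne_top
  rw [gauss_block ε hε θ P hP h hh, ← ENNReal.ofReal_div_of_pos (Real.exp_pos _),
    ← Real.exp_sub] at mk
  refine (measure_mono ?_).trans (mk.trans ?_)
  · intro x hx
    simp only [Set.mem_ofPred_eq] at hx ⊢
    apply ENNReal.ofReal_le_ofReal
    apply Real.exp_le_exp.2
    have := mul_le_mul_of_nonneg_left hx (show 0 ≤ 1 / (2 * ε ^ 2) by positivity)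
    calc h * A * k / 2 = 1 / (2 * ε ^ 2) * (h * (A * ε ^ 2 * k)) := by field_simp
      _ ≤ _ := this
      _ = _ := by ring
  · apply ENNReal.ofReal_le_ofReal
    apply Real.exp_le_exp.2
    have := mul_le_mul_of_nonneg_left ht (show 0 ≤ 1 / (2 * ε ^ 2 * (1 - h)) by positivity)
    have e1 : 1 / (2 * ε ^ 2 * (1 - h)) * (h * (t * ε ^ 2 * k)) = k * (t * h / (1 - h)) / 2 := by
      field_simp
    have e2 : h / (2 * ε ^ 2 * (1 - h)) * ∑ i ∈ Finset.Icc (a + 1) (a + k), θ i ^ 2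
      = 1 / (2 * ε ^ 2 * (1 - h)) * (h * ∑ i ∈ Finset.Icc (a + 1) (a + k), θ i ^ 2) := by ring
    rw [e2]
    rw [e1] at this
    simp only [fFun]
    linarith

lemma sup_aux (S : Set ℝ) (hS : S.Nonempty) (k : ℕ) (hk : 0 < k) (p : ENNReal)
    (hp : ∀ s ∈ S, p ≤ ENNReal.ofReal (Real.exp (-(k * s)))) :
    p ≤ ENNReal.ofReal (Real.exp (-(k : ℝ) * sSup S)) := by
  have hk' : (0 : ℝ) < k := by exact_mod_cast hk
  obtain ⟨s0, hs0⟩ := hS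
  have hfin : p ≠ ⊤ := ne_top_of_le_ne_top ENNReal.ofReal_ne_top (hp s0 hs0)
  rcases eq_or_ne p 0 with h0 | h0
  · simp [h0]
  have hpos : 0 < p.toReal := ENNReal.toReal_pos h0 hfin
  rw [← ENNReal.ofReal_toReal hfin]
  apply ENNReal.ofReal_le_ofReal
  have : sSup S ≤ -Real.log p.toReal / k := by
    refine csSup_le ⟨s0, hs0⟩ fun s hs => ?_
    have h2 : p.toReal ≤ Real.exp (-(k * s)) :=
      ENNReal.toReal_le_of_le_ofReal (Real.exp_pos _).le (hp s hs)
    have := (Real.log_le_iff_le_exp hpos).2 h2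
    rw [le_div_iff₀ hk']; linarith
  rw [← Real.log_le_iff_le_exp hpos]
  rw [le_div_iff₀ hk'] at this
  linarith

lemma right_bound (ε : ℝ) (hε : 0 < ε) (θ : ℕ → ℝ) (P : Measure (ℕ → ℝ))
    (hP : IsGaussianProduct ε θ P) (A t : ℝ) (a k : ℕ) (hk : 0 < k)
    (ht : ∑ i ∈ Finset.Icc (a + 1) (a + k), θ i ^ 2 ≤ t * ε ^ 2 * k) :
    P {x | A * ε ^ 2 * k ≤ ∑ i ∈ Finset.Icc (a + 1) (a + k), x i ^ 2} ≤
      ENNReal.ofReal (Real.exp (-(k : ℝ) * fSup A t)) := by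
  refine sup_aux _ (Set.Nonempty.image _ ⟨0, by simp⟩) k hk _ ?_
  rintro _ ⟨h, ⟨h0, h1⟩, rfl⟩
  refine (measure_mono ?_).trans (chernoff ε hε θ P hP h A t h1 a k
    (mul_le_mul_of_nonneg_left ht h0))
  intro x hx
  exact mul_le_mul_of_nonneg_left hx h0

lemma left_bound (ε : ℝ) (hε : 0 < ε) (θ : ℕ → ℝ) (P : Measure (ℕ → ℝ))
    (hP : IsGaussianProduct ε θ P) (A t : ℝ) (a k : ℕ) (hk : 0 < k)
    (ht : t * ε ^ 2 * k ≤ ∑ i ∈ Finset.Icc (a + 1) (a + k), θ i ^ 2) :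
    P {x | ∑ i ∈ Finset.Icc (a + 1) (a + k), x i ^ 2 ≤ A * ε ^ 2 * k} ≤
      ENNReal.ofReal (Real.exp (-(k : ℝ) * gSup A t)) := by
  refine sup_aux _ (Set.Nonempty.image _ ⟨0, by simp⟩) k hk _ ?_
  rintro _ ⟨h, ⟨h0, h1⟩, rfl⟩
  refine (measure_mono ?_).trans (chernoff ε hε θ P hP (-h) A t (by linarith) a k
    (mul_le_mul_of_nonpos_left ht (by linarith)))
  intro x hx
  have hx' : ∑ i ∈ Finset.Icc (a + 1) (a + k), x i ^ 2 ≤ A * ε ^ 2 * k := hx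
  exact mul_le_mul_of_nonpos_left hx' (by linarith)

lemma crit_diff (ε A : ℝ) (x : ℕ → ℝ) (a k : ℕ) :
    critF ε A x (a + k) = critF ε A x a
      - ∑ i ∈ Finset.Icc (a + 1) (a + k), x i ^ 2 + A * ε ^ 2 * k := by
  have : ∑ i ∈ Finset.Icc 1 (a + k), x i ^ 2 = ∑ i ∈ Finset.Icc 1 a, x i ^ 2 +
      ∑ i ∈ Finset.Icc (a + 1) (a + k), x i ^ 2 := by
    induction k with
    | zero => simp
    | succ k ih =>
      rw [← add_assoc, Finset.sum_Icc_succ_top (by omega), Finset.sum_Icc_succ_top (by omega), ih]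
      ring
  simp only [critF, this]
  push_cast
  ring

lemma tail_diff (θ : ℕ → ℝ) (hθ : Summable (fun i => θ i ^ 2)) (a k : ℕ) :
    tailSum θ a = tailSum θ (a + k) + ∑ i ∈ Finset.Icc (a + 1) (a + k), θ i ^ 2 := by
  have e : ∀ i : ℕ, (if a < i then θ i ^ 2 else 0) = (if a + k < i then θ i ^ 2 else 0) +
      (if i ∈ Finset.Icc (a + 1) (a + k) then θ i ^ 2 else 0) := by
    intro i
    simp only [Finset.mem_Icc]
    split_ifs <;> first | omega | simp
  simp only [tailSum]
  rw [tsum_congr e, Summable.tsum_add]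
  · congr 1
    rw [tsum_eq_sum (s := Finset.Icc (a + 1) (a + k)) (fun i hi => if_neg hi)]
    exact Finset.sum_congr rfl fun i hi => if_pos hi
  · refine Summable.of_nonneg_of_le (fun i => ?_) (fun i => ?_) hθ
    · split_ifs <;> positivity
    · split_ifs
      · exact le_rfl
      · positivity
  · exact summable_of_ne_finset_zero (s := Finset.Icc (a + 1) (a + k)) (fun i hi => if_neg hi)

theorem stmt15 (ε τ t₀ A : ℝ) (hε : 0 < ε) (ht₀ : 0 < t₀) (ht₀τ : t₀ < τ)
    (N₀ : ℕ) (hN₀ : 1 ≤ N₀) (hA1 : 1 + t₀ < A) (hA2 : A < 1 + τ) :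
    0 < fSup A t₀ ∧ 0 < gSup A τ ∧
    ∀ θ : ℕ → ℝ, Summable (fun i => θ i ^ 2) →
    (∀ d : ℕ, N₀ ≤ d →
      ∑ i ∈ Finset.Icc (effDim ε τ θ + 1) (effDim ε τ θ + d), θ i ^ 2 ≤ t₀ * ε ^ 2 * d) →
    ∀ n₁ n₂ : ℕ, 1 ≤ n₁ → N₀ ≤ n₂ →
    ∀ P : Measure (ℕ → ℝ), IsGaussianProduct ε θ P →
    P {x | ∃ d : ℕ, 1 ≤ d ∧ (d + n₁ < effDim ε τ θ ∨ effDim ε τ θ + n₂ < d) ∧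
        critF ε A x d ≤ critF ε A x (effDim ε τ θ)} ≤
      ENNReal.ofReal (Real.exp (-(fSup A t₀) * n₂) / (1 - Real.exp (-(fSup A t₀))) +
        Real.exp (-(gSup A τ) * n₁) / (1 - Real.exp (-(gSup A τ)))) := by
  have hA : 0 < A := by linarith
  have hτ : 0 < τ := by linarith
  have hα := fSup_pos A t₀ ht₀ hA1
  have hβ := gSup_pos A τ hA hτ hA2
  refine ⟨hα, hβ, ?_⟩
  intro θ hθ hT n₁ n₂ hn₁ hn₂ P hP
  have hmin : ∀ a k : ℕ, 1 ≤ a → a + k = effDim ε τ θ →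
      τ * ε ^ 2 * k ≤ ∑ i ∈ Finset.Icc (a + 1) (a + k), θ i ^ 2 := by
    intro a k ha hak
    have hne : {d : ℕ | 1 ≤ d ∧ ∀ d' : ℕ, 1 ≤ d' → rErr ε τ θ d ≤ rErr ε τ θ d'}.Nonempty :=
      Nat.nonempty_of_pos_sInf (show 0 < effDim ε τ θ by omega)
    have h1 := (Nat.sInf_mem hne).2 a ha
    change rErr ε τ θ (effDim ε τ θ) ≤ _ at h1
    rw [← hak] at h1
    simp only [rErr] at h1
    rw [tail_diff θ hθ a k] at h1
    push_cast at h1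
    linarith
  generalize effDim ε τ θ = m at *
  have hsub : {x : ℕ → ℝ | ∃ d : ℕ, 1 ≤ d ∧ (d + n₁ < m ∨ m + n₂ < d) ∧
        critF ε A x d ≤ critF ε A x m} ⊆
      (⋃ k : ℕ, {x : ℕ → ℝ | A * ε ^ 2 * (n₂ + 1 + k : ℕ) ≤
        ∑ i ∈ Finset.Icc (m + 1) (m + (n₂ + 1 + k)), x i ^ 2}) ∪
      (⋃ k : ℕ, {x : ℕ → ℝ | ∃ a, 1 ≤ a ∧ a + (n₁ + 1 + k) = m ∧
        ∑ i ∈ Finset.Icc (a + 1) (a + (n₁ + 1 + k)), x i ^ 2 ≤ A * ε ^ 2 * (n₁ + 1 + k : ℕ)}) := by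
    rintro x ⟨d, hd, hd1 | hd1, hc⟩
    · right
      obtain ⟨k, rfl⟩ : ∃ k, m = d + (n₁ + 1 + k) := ⟨m - (d + n₁ + 1), by omega⟩
      rw [crit_diff] at hc
      refine Set.mem_iUnion.2 ⟨k, d, hd, rfl, ?_⟩
      linarith
    · left
      obtain ⟨k, rfl⟩ : ∃ k, d = m + (n₂ + 1 + k) := ⟨d - (m + n₂ + 1), by omega⟩
      rw [crit_diff] at hc
      refine Set.mem_iUnion.2 ⟨k, ?_⟩
      simp only [Set.mem_ofPred_eq]
      linarith
  have hpa : 0 ≤ Real.exp (-(fSup A t₀) * n₂) / (1 - Real.exp (-(fSup A t₀))) :=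
    div_nonneg (Real.exp_pos _).le (by
      have : Real.exp (-(fSup A t₀)) ≤ 1 := by simpa using hα.le
      linarith)
  have hpb : 0 ≤ Real.exp (-(gSup A τ) * n₁) / (1 - Real.exp (-(gSup A τ))) :=
    div_nonneg (Real.exp_pos _).le (by
      have : Real.exp (-(gSup A τ)) ≤ 1 := by simpa using hβ.le
      linarith)
  rw [ENNReal.ofReal_add hpa hpb]
  refine (measure_mono hsub).trans ((measure_union_le _ _).trans (add_le_add ?_ ?_))
  · refine (measure_iUnion_le _).trans (le_trans (ENNReal.tsum_le_tsum fun k => ?_)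
      (geom_aux _ hα n₂))
    exact right_bound ε hε θ P hP A t₀ m _ (by omega) (hT _ (by omega))
  · refine (measure_iUnion_le _).trans (le_trans (ENNReal.tsum_le_tsum fun k => ?_)
      (geom_aux _ hβ n₁))
    by_cases hex : ∃ a, 1 ≤ a ∧ a + (n₁ + 1 + k) = m
    · obtain ⟨a, ha, hak⟩ := hex
      refine (measure_mono ?_).trans (left_bound ε hε θ P hP A τ a (n₁ + 1 + k) (by omega)
        (hmin a _ ha hak))
      rintro x ⟨a', ha', hak', hx⟩
      obtain rfl : a' = a := by omega
      exact hx
    · refine le_trans (le_of_eq ?_) zero_le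
      convert measure_empty (μ := P)
      ext x
      simp only [Set.mem_ofPred_eq, Set.mem_empty_iff_false, iff_false]
      rintro ⟨a, ha, hak, -⟩
      exact hex ⟨a, ha, hak⟩
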